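/- Let μ be uniformly distributed (with respect to the unitarily invariant probability measure) on the complex unit sphere S_C^{d−1}, and let y ∈ S_C^{d−1} be fixed. For every ε ∈ [0,1], the probability that |⟨y, μ⟩| < ε is at most 2√(d/π)·ε. -/

import Mathlib

open scoped InnerProductSpace Real
open MeasureTheory

/-!
Integrate `1_{|⟪z, x⟫| < ε}` over `x` distributed by `P` and `z` uniform in the unit ball. Unitary
invariance makes the `P`-measure of `{x | |⟪z, x⟫| < ε}` depend on `‖z‖` only, and decreasing in
`‖z‖`, so integrating over `x` first bounds the probability for a unit vector `y` from above by the
double integral. Integrating over `z` first leaves, for each unit vector `x`, the relative volume of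
the part `|⟪x, z⟫| < ε` of the ball. That part is contained in the product of a disc of radius `ε`
and the unit ball of the complex hyperplane orthogonal to `x`, so its relative volume is at most
`ε² π · (π ^ (d - 1) / (d - 1)!) / (π ^ d / d!) = d ε²`. Finally a number `p ∈ [0, 1]` with
`p ≤ d ε²` satisfies `p² ≤ d ε²`, and `1 ≤ 2 / √π`.
-/

open Metric Module Submodule

section RCLike

variable {𝕜 E : Type*} [RCLike 𝕜] [NormedAddCommGroup E] [InnerProductSpace 𝕜 E]

lemma measurableSet_norm_inner_lt [MeasurableSpace E] [BorelSpace E] (y : E) (ε : ℝ) :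
    MeasurableSet {x | ‖⟪y, x⟫_𝕜‖ < ε} :=
  (isOpen_lt (by fun_prop) continuous_const).measurableSet

variable [FiniteDimensional 𝕜 E]

lemma exists_linearIsometryEquiv_apply_eq_of_norm_eq_one {x y : E} (hx : ‖x‖ = 1)
    (hy : ‖y‖ = 1) : ∃ U : E ≃ₗᵢ[𝕜] E, U x = y := by
  let e : 𝕜 ≃ₗᵢ[𝕜] (𝕜 ∙ x) := LinearIsometryEquiv.toSpanUnitSingleton x hx
  let L : (𝕜 ∙ x) →ₗᵢ[𝕜] E :=
    (LinearIsometry.toSpanSingleton 𝕜 E hy).comp e.symm.toLinearIsometry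
  refine ⟨L.extend.toLinearIsometryEquiv rfl, ?_⟩
  calc L.extend x = L.extend (e 1) := by simp [e]
    _ = L (e 1) := L.extend_apply (e 1)
    _ = y := by simp [L]

variable [MeasurableSpace E] [BorelSpace E] {P : Measure E}

lemma measure_norm_inner_lt_eq_of_norm_eq_one (hinv : ∀ U : E ≃ₗᵢ[𝕜] E, P.map U = P)
    {y w : E} (hy : ‖y‖ = 1) (hw : ‖w‖ = 1) (ε : ℝ) :
    P {x | ‖⟪y, x⟫_𝕜‖ < ε} = P {x | ‖⟪w, x⟫_𝕜‖ < ε} := by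
  obtain ⟨U, rfl⟩ := exists_linearIsometryEquiv_apply_eq_of_norm_eq_one (𝕜 := 𝕜) hy hw
  conv_rhs => rw [← hinv U, Measure.map_apply U.continuous.measurable
    (measurableSet_norm_inner_lt _ _)]
  simp only [Set.preimage_ofPred_eq, U.inner_map_map]

lemma measure_norm_inner_lt_le_of_norm_le_one (hinv : ∀ U : E ≃ₗᵢ[𝕜] E, P.map U = P)
    {y z : E} (hy : ‖y‖ = 1) (hz : ‖z‖ ≤ 1) (ε : ℝ) :
    P {x | ‖⟪y, x⟫_𝕜‖ < ε} ≤ P {x | ‖⟪z, x⟫_𝕜‖ < ε} := by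
  obtain ⟨w, hw, hzw⟩ : ∃ w : E, ‖w‖ = 1 ∧ z = (‖z‖ : 𝕜) • w := by
    rcases eq_or_ne z 0 with rfl | hz0
    · exact ⟨y, hy, by simp⟩
    · exact ⟨(‖z‖⁻¹ : 𝕜) • z, norm_smul_inv_norm hz0, by simp [smul_smul, hz0]⟩
  rw [measure_norm_inner_lt_eq_of_norm_eq_one hinv hy hw]
  refine measure_mono fun x (hx : ‖⟪w, x⟫_𝕜‖ < ε) ↦ ?_
  calc ‖⟪z, x⟫_𝕜‖ = ‖z‖ * ‖⟪w, x⟫_𝕜‖ := by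
        rw [hzw, inner_smul_left, norm_mul]
        simp [norm_smul, hw]
    _ ≤ ‖⟪w, x⟫_𝕜‖ := mul_le_of_le_one_left (norm_nonneg _) hz
    _ < ε := hx

lemma measure_norm_inner_lt_mul_measure_univ_le [IsProbabilityMeasure P]
    (hsphere : ∀ᵐ x ∂P, ‖x‖ = 1) (hinv : ∀ U : E ≃ₗᵢ[𝕜] E, P.map U = P)
    {Q : Measure E} [SFinite Q] (hball : ∀ᵐ z ∂Q, ‖z‖ ≤ 1) {ε : ℝ} {C : ENNReal}
    (hC : ∀ x : E, ‖x‖ = 1 → Q {z | ‖⟪x, z⟫_𝕜‖ < ε} ≤ C) {y : E} (hy : ‖y‖ = 1) :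
    P {x | ‖⟪y, x⟫_𝕜‖ < ε} * Q Set.univ ≤ C := by
  have : ProperSpace E := FiniteDimensional.proper_rclike 𝕜 E
  have hmeas : MeasurableSet {q : E × E | ‖⟪q.1, q.2⟫_𝕜‖ < ε} :=
    (isOpen_lt (by fun_prop) continuous_const).measurableSet
  calc P {x | ‖⟪y, x⟫_𝕜‖ < ε} * Q Set.univ
      = ∫⁻ _, P {x | ‖⟪y, x⟫_𝕜‖ < ε} ∂Q := (lintegral_const _).symm
    _ ≤ ∫⁻ z, P {x | ‖⟪z, x⟫_𝕜‖ < ε} ∂Q := lintegral_mono_ae <| hball.mono fun z hz ↦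
        measure_norm_inner_lt_le_of_norm_le_one hinv hy hz ε
    _ = (Q.prod P) {q : E × E | ‖⟪q.1, q.2⟫_𝕜‖ < ε} := (Measure.prod_apply hmeas).symm
    _ = ∫⁻ x, Q {z | ‖⟪z, x⟫_𝕜‖ < ε} ∂P := Measure.prod_apply_symm hmeas
    _ = ∫⁻ x, Q {z | ‖⟪x, z⟫_𝕜‖ < ε} ∂P := by simp only [norm_inner_symm]
    _ ≤ ∫⁻ _, C ∂P := lintegral_mono_ae <| hsphere.mono hC
    _ = C := by simp

end RCLike

section RealVolume

variable {E : Type*} [NormedAddCommGroup E] [InnerProductSpace ℝ E] [FiniteDimensional ℝ E]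
  [MeasurableSpace E] [BorelSpace E]

lemma volume_ball_one_of_finrank_eq_two_mul {k : ℕ} (hk : finrank ℝ E = 2 * k) (x : E) :
    volume (ball x 1) = ENNReal.ofReal (π ^ k / k.factorial) := by
  rcases subsingleton_or_nontrivial E with hE | hE
  · obtain rfl : k = 0 := by simpa [finrank_zero_of_subsingleton] using hk.symm
    rw [Subsingleton.eq_univ_of_nonempty (nonempty_ball.2 one_pos),
      ← Subsingleton.eq_univ_of_nonempty (s := parallelepiped (stdOrthonormalBasis ℝ E)) ?_,
      OrthonormalBasis.volume_parallelepiped]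
    · simp
    · exact ⟨0, (mem_parallelepiped_iff _ _).2 ⟨0, by simp, by simp⟩⟩
  · simp [InnerProductSpace.volume_ball_of_dim_even hk]

lemma volume_ball_inter_norm_orthogonalProjectionOnto_lt_le (K : Submodule ℝ E) (r ε : ℝ) :
    volume (ball (0 : E) r ∩ {z | ‖K.orthogonalProjectionOnto z‖ < ε}) ≤
      volume (ball (0 : K) ε) * volume (ball (0 : Kᗮ) r) := by
  have hsplit : MeasurePreserving
      (fun z : E ↦ (K.orthogonalProjectionOnto z, Kᗮ.orthogonalProjectionOnto z)) := by
    convert! (WithLp.volume_preserving_ofLp K Kᗮ).comp K.orthogonalDecomposition.measurePreserving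
      using 1
    ext z <;> simp
  rw [← Measure.prod_prod, ← Measure.volume_eq_prod, ← hsplit.measure_preimage
    (measurableSet_ball.prod measurableSet_ball).nullMeasurableSet]
  refine measure_mono fun z ⟨hzr, hzε⟩ ↦ ⟨mem_ball_zero_iff.2 hzε, mem_ball_zero_iff.2 ?_⟩
  exact (Kᗮ.norm_orthogonalProjectionOnto_apply_le z).trans_lt (mem_ball_zero_iff.1 hzr)

end RealVolume

section Complex

variable {E : Type*} [NormedAddCommGroup E] [InnerProductSpace ℂ E]

/-- The real inner product `re ⟪x, y⟫`, which supplies Lebesgue measure on `E`. It is local because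
a global instance would form a diamond with spaces that carry their own real structure. -/
noncomputable local instance realInnerProductSpace : InnerProductSpace ℝ E :=
  InnerProductSpace.rclikeToReal ℂ E

lemma starProjection_restrictScalars_real (K : Submodule ℂ E) [K.HasOrthogonalProjection]
    [(K.restrictScalars ℝ).HasOrthogonalProjection] (x : E) :
    (K.restrictScalars ℝ).starProjection x = K.starProjection x := by
  refine eq_starProjection_of_mem_of_inner_eq_zero (K.starProjection_apply_mem x) fun w hw ↦ ?_
  rw [real_inner_eq_re_inner ℂ, K.starProjection_inner_eq_zero x w hw, map_zero]

lemma norm_orthogonalProjectionOnto_restrictScalars_span_singleton {y : E} (hy : ‖y‖ = 1)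
    [((ℂ ∙ y).restrictScalars ℝ).HasOrthogonalProjection] (x : E) :
    ‖((ℂ ∙ y).restrictScalars ℝ).orthogonalProjectionOnto x‖ = ‖⟪y, x⟫_ℂ‖ := by
  rw [← norm_coe, ← starProjection_apply, starProjection_restrictScalars_real,
    starProjection_unit_singleton ℂ hy, norm_smul, hy, mul_one]

variable [FiniteDimensional ℂ E] [MeasurableSpace E] [BorelSpace E]

lemma volume_ball_one_inter_norm_inner_lt_le_of_finrank_eq {n : ℕ} (hn : finrank ℂ E = n + 1)
    {y : E} (hy : ‖y‖ = 1) (ε : ℝ) :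
    volume (ball (0 : E) 1 ∩ {z | ‖⟪y, z⟫_ℂ‖ < ε}) ≤
      ENNReal.ofReal ε ^ 2 * ENNReal.ofReal (π * (π ^ n / n.factorial)) := by
  let K : Submodule ℝ E := (ℂ ∙ y).restrictScalars ℝ
  have hproj : ∀ z, ‖K.orthogonalProjectionOnto z‖ = ‖⟪y, z⟫_ℂ‖ :=
    norm_orthogonalProjectionOnto_restrictScalars_span_singleton hy
  have hy0 : y ≠ 0 := norm_ne_zero_iff.1 (hy ▸ one_ne_zero)
  have hK : finrank ℝ K = 2 * 1 :=
    (finrank_real_of_complex (ℂ ∙ y)).trans (by rw [finrank_span_singleton hy0])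
  have hKperp : finrank ℝ Kᗮ = 2 * n := by
    have hsum := K.finrank_add_finrank_orthogonal
    rw [finrank_real_of_complex] at hsum
    lia
  have : Nontrivial K := nontrivial_of_finrank_pos (R := ℝ) (by lia)
  calc volume (ball (0 : E) 1 ∩ {z | ‖⟪y, z⟫_ℂ‖ < ε})
      = volume (ball (0 : E) 1 ∩ {z | ‖K.orthogonalProjectionOnto z‖ < ε}) := by
        simp only [hproj]
    _ ≤ volume (ball (0 : K) ε) * volume (ball (0 : Kᗮ) 1) :=
        volume_ball_inter_norm_orthogonalProjectionOnto_lt_le K 1 ε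
    _ = ENNReal.ofReal ε ^ 2 * ENNReal.ofReal (π * (π ^ n / n.factorial)) := by
        rw [InnerProductSpace.volume_ball_of_dim_even hK, hK,
          volume_ball_one_of_finrank_eq_two_mul hKperp, ENNReal.ofReal_mul Real.pi_nonneg]
        simp [mul_assoc]

lemma volume_ball_one_inter_norm_inner_lt_le {y : E} (hy : ‖y‖ = 1) (ε : ℝ) :
    volume (ball (0 : E) 1 ∩ {z | ‖⟪y, z⟫_ℂ‖ < ε}) ≤
      finrank ℂ E * ENNReal.ofReal ε ^ 2 * volume (ball (0 : E) 1) := by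
  have : Nontrivial E := ⟨y, 0, norm_ne_zero_iff.1 (hy ▸ one_ne_zero)⟩
  obtain ⟨n, hn⟩ : ∃ n, finrank ℂ E = n + 1 := Nat.exists_eq_succ_of_ne_zero finrank_pos.ne'
  have hball : volume (ball (0 : E) 1) = ENNReal.ofReal (π ^ (n + 1) / (n + 1).factorial) :=
    volume_ball_one_of_finrank_eq_two_mul (hn ▸ finrank_real_of_complex E) 0
  have hratio : π * (π ^ n / n.factorial) =
      (n + 1 : ℕ) * (π ^ (n + 1) / (n + 1).factorial) := by
    rw [Nat.factorial_succ, pow_succ]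
    push_cast
    field_simp
  refine (volume_ball_one_inter_norm_inner_lt_le_of_finrank_eq hn hy ε).trans_eq ?_
  rw [hratio, ENNReal.ofReal_mul (Nat.cast_nonneg _), ENNReal.ofReal_natCast, hball, hn]
  ring

lemma measure_norm_inner_lt_le_finrank_mul_sq {P : Measure E} [IsProbabilityMeasure P]
    (hsphere : ∀ᵐ x ∂P, ‖x‖ = 1) (hinv : ∀ U : E ≃ₗᵢ[ℂ] E, P.map U = P)
    {y : E} (hy : ‖y‖ = 1) (ε : ℝ) :
    P {x | ‖⟪y, x⟫_ℂ‖ < ε} ≤ finrank ℂ E * ENNReal.ofReal ε ^ 2 := by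
  let Q : Measure E := volume.restrict (ball 0 1)
  have hball : ∀ᵐ z ∂Q, ‖z‖ ≤ 1 :=
    (ae_restrict_mem measurableSet_ball).mono fun z hz ↦ (mem_ball_zero_iff.1 hz).le
  have hslab : ∀ x : E, ‖x‖ = 1 → Q {z | ‖⟪x, z⟫_ℂ‖ < ε} ≤
      finrank ℂ E * ENNReal.ofReal ε ^ 2 * volume (ball (0 : E) 1) := fun x hx ↦ by
    rw [Measure.restrict_apply (measurableSet_norm_inner_lt x ε), Set.inter_comm]
    exact volume_ball_one_inter_norm_inner_lt_le hx ε
  have hcompare := measure_norm_inner_lt_mul_measure_univ_le hsphere hinv hball hslab hy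
  rw [Measure.restrict_apply_univ] at hcompare
  exact (ENNReal.mul_le_mul_iff_left (measure_ball_pos _ _ one_pos).ne'
    measure_ball_lt_top.ne).1 hcompare

end Complex

lemma sqrt_le_two_mul_sqrt_div_pi (x : ℝ) : √x ≤ 2 * √(x / π) := by
  have hpi : √π ≤ 2 := Real.sqrt_le_iff.2 ⟨zero_le_two, by linarith [Real.pi_le_four]⟩
  rw [Real.sqrt_div' x Real.pi_nonneg, mul_div_left_comm]
  exact le_mul_of_one_le_right (Real.sqrt_nonneg x)
    ((one_le_div (Real.sqrt_pos.2 Real.pi_pos)).2 hpi)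

theorem stmt_11_general {E : Type*} [NormedAddCommGroup E] [InnerProductSpace ℂ E]
    [FiniteDimensional ℂ E] [MeasurableSpace E] [BorelSpace E]
    (P : Measure E) [IsProbabilityMeasure P] (hsphere : P {x | ‖x‖ = 1} = 1)
    (hinv : ∀ U : E ≃ₗᵢ[ℂ] E, P.map U = P) (y : E) (hy : ‖y‖ = 1) (ε : ℝ) (hε : 0 ≤ ε) :
    (P {μ | ‖⟪y, μ⟫_ℂ‖ < ε}).toReal ≤ 2 * √(finrank ℂ E / π) * ε := by
  have hsphere_ae : ∀ᵐ x ∂P, ‖x‖ = 1 :=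
    (mem_ae_iff_prob_eq_one (measurableSet_eq_fun measurable_norm measurable_const)).2 hsphere
  set p : ℝ := P.real {μ | ‖⟪y, μ⟫_ℂ‖ < ε}
  have hp : p ≤ finrank ℂ E * ε ^ 2 := by
    simpa [p, measureReal_def, hε] using ENNReal.toReal_mono (by finiteness)
      (measure_norm_inner_lt_le_finrank_mul_sq hsphere_ae hinv hy ε)
  calc p ≤ √(finrank ℂ E * ε ^ 2) :=
        Real.le_sqrt_of_sq_le ((pow_le_of_le_one measureReal_nonneg measureReal_le_one
          two_ne_zero).trans hp)
    _ = √(finrank ℂ E) * ε := by rw [Real.sqrt_mul' _ (sq_nonneg ε), Real.sqrt_sq hε]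
    _ ≤ 2 * √(finrank ℂ E / π) * ε :=
        mul_le_mul_of_nonneg_right (sqrt_le_two_mul_sqrt_div_pi _) hε

theorem stmt_11 (d : ℕ)
    [MeasurableSpace (EuclideanSpace ℂ (Fin d))]
    [BorelSpace (EuclideanSpace ℂ (Fin d))]
    (P : Measure (EuclideanSpace ℂ (Fin d))) [IsProbabilityMeasure P]
    (hsphere : P {x | ‖x‖ = 1} = 1)
    (hinv : ∀ U : EuclideanSpace ℂ (Fin d) ≃ₗᵢ[ℂ] EuclideanSpace ℂ (Fin d),
      P.map U = P)
    (y : EuclideanSpace ℂ (Fin d)) (hy : ‖y‖ = 1)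
    (ε : ℝ) (hε : ε ∈ Set.Icc (0 : ℝ) 1) :
    (P {μ | ‖⟪y, μ⟫_ℂ‖ < ε}).toReal ≤ 2 * Real.sqrt (d / π) * ε := by
  simpa using stmt_11_general P hsphere hinv y hy ε hε.1
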